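/- For all natural numbers i, j with j ≤ i, the odd-odd monic Legendre refinement integral has the balanced ₄F₃ representation I_{2i+1,2j+1} = −2^{2j} · [(−i)_j (−i−1/2)_{j+1} (2j+1)! / ((i+3/2)_{j+1} (i+1)_{j+1} (2j+2)_{2j+1})] · Σ_{k=0}^{i−j} [(−(i−j))_k (−i+j+1/2)_k (−i−j−1)_k (−i−j−3/2)_k] / [(−2i−1/2)_k (−i)_k (−i−1/2)_k k!]. -/

import Mathlib

/-!
Expand `p_m` (with `m = 2i+1`) in powers of `t` and integrate term by term. The moments of the
shifted polynomial are explicit: writing `p_n(2t-1) = (n!/(2n)!) 2ⁿ Dⁿ (t²-t)ⁿ` and integrating by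
parts `n` times reduces `∫₀¹ t^a p_n(2t-1) dt` to a Beta integral, giving
`(n!)² 2ⁿ/(2n)! · a!² / ((a-n)! (a+n+1)!)` for `n ≤ a` and `0` for `a < n`
(`integral_pow_mul_legendre`). With `a = m - 2k` and `n = 2j+1`, exactly the terms `k ≤ i - j`
survive, and they coincide one by one with the terms of the hypergeometric sum once the factorials
are turned into Pochhammer symbols by the duplication formulas `poch_half_neg`, `poch_half_pos`
and `poch_half_sub`.
-/

open MeasureTheory

/-- The monic Legendre polynomial of degree `n`,
`p_n(t) = (n!/(2n)!) dⁿ/dtⁿ (t²-1)ⁿ`. -/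
noncomputable def legendreMonic (n : ℕ) : ℝ → ℝ := fun t =>
  ((n.factorial : ℝ) / (2 * n).factorial) * iteratedDeriv n (fun s => (s ^ 2 - 1) ^ n) t

/-- The monic Legendre refinement integral `I_{i,j} = ∫_0^1 p_i(t) p_j(2t-1) dt`. -/
noncomputable def alpertI (i j : ℕ) : ℝ :=
  ∫ t in (0:ℝ)..1, legendreMonic i t * legendreMonic j (2 * t - 1)

/-- The Pochhammer symbol `(a)_k = a(a+1)⋯(a+k-1)`. -/
noncomputable def poch (a : ℝ) (k : ℕ) : ℝ := ∏ m ∈ Finset.range k, (a + m)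

open Polynomial in
theorem iteratedDeriv_polynomial_eval (p : ℝ[X]) (n : ℕ) :
    iteratedDeriv n (fun t => p.eval t) = fun t => (derivative^[n] p).eval t := by
  induction n generalizing p with
  | zero => simp
  | succ n ih =>
    rw [iteratedDeriv_succ']
    have : deriv (fun t => p.eval t) = fun t => (derivative p).eval t := by
      funext t; exact p.deriv
    rw [this, ih, Function.iterate_succ_apply]

/-- The terms with `m < 2 * k` vanish since their descending factorial is zero. -/
theorem legendreMonic_expansion (m : ℕ) (t : ℝ) :
    legendreMonic m t = ∑ k ∈ Finset.range (m + 1), ((m.factorial : ℝ) / (2 * m).factorial) *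
      ((-1) ^ k * (m.choose k : ℝ) * ((2 * m - 2 * k).descFactorial m : ℝ)) *
        t ^ (m - 2 * k) := by
  have h1 : (fun s : ℝ => (s ^ 2 - 1) ^ m) = fun s => ((∑ k ∈ Finset.range (m + 1),
      Polynomial.C ((-1) ^ k * (m.choose k : ℝ)) * Polynomial.X ^ (2 * m - 2 * k)) :
        Polynomial ℝ).eval s := by
    funext s
    rw [sub_eq_neg_add, add_pow, Polynomial.eval_finsetSum]
    refine Finset.sum_congr rfl fun k _ => ?_
    simp only [Polynomial.eval_mul, Polynomial.eval_C, Polynomial.eval_pow, Polynomial.eval_X]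
    rw [← pow_mul, Nat.mul_sub]
    ring
  unfold legendreMonic
  rw [h1, iteratedDeriv_polynomial_eval, Polynomial.iterate_derivative_sum]
  beta_reduce
  rw [Polynomial.eval_finsetSum, Finset.mul_sum]
  refine Finset.sum_congr rfl fun k _ => ?_
  rw [Polynomial.iterate_derivative_C_mul, Polynomial.iterate_derivative_X_pow_eq_natCast_mul]
  simp only [Polynomial.eval_mul, Polynomial.eval_C, Polynomial.eval_pow, Polynomial.eval_X,
    Polynomial.eval_natCast]
  rw [show 2 * m - 2 * k - m = m - 2 * k by omega]
  ring

open Polynomial in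
theorem legendreMonic_shift (n : ℕ) (t : ℝ) :
    legendreMonic n (2 * t - 1) = ((n.factorial : ℝ) / (2 * n).factorial) * 2 ^ n *
      (derivative^[n] ((X * (X - 1)) ^ n : ℝ[X])).eval t := by
  -- Compare the `n`-th derivatives of both sides of `((2s-1)²-1)ⁿ = 4ⁿ (s(s-1))ⁿ`.
  have h1 : (fun s : ℝ => (s ^ 2 - 1) ^ n) = fun s => ((X ^ 2 - 1) ^ n : ℝ[X]).eval s := by
    funext s; simp
  have h2 : ((X ^ 2 - 1) ^ n : ℝ[X]).comp (C 2 * X - 1) = C (4 ^ n) * (X * (X - 1)) ^ n := by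
    simp only [pow_comp, sub_comp, X_comp, one_comp, C_pow]
    rw [← mul_pow]
    congr 1
    have : (C 4 : ℝ[X]) = C 2 * C 2 := by rw [← C_mul]; norm_num
    have h3 : (C 2 : ℝ[X]) = 2 := rfl
    rw [this, h3]; ring
  have h4 : ∀ (q : ℝ[X]) (k : ℕ), derivative^[k] (q.comp (C 2 * X - 1)) =
      C (2 ^ k) * (derivative^[k] q).comp (C 2 * X - 1) := by
    intro q k
    induction k with
    | zero => simp
    | succ k ih =>
      rw [Function.iterate_succ_apply', ih, Function.iterate_succ_apply', derivative_C_mul,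
        derivative_comp]
      simp [pow_succ]
      ring
  have h5 := congrArg (fun q => q.eval t) (h4 ((X ^ 2 - 1) ^ n) n)
  simp only [h2, iterate_derivative_C_mul, eval_mul, eval_C, eval_comp, eval_sub, eval_X,
    eval_one] at h5
  unfold legendreMonic
  rw [h1, iteratedDeriv_polynomial_eval, mul_assoc]
  congr 1
  have h6 : (4 : ℝ) ^ n = 2 ^ n * 2 ^ n := by rw [← mul_pow]; norm_num
  rw [h6, mul_assoc] at h5
  exact (mul_left_cancel₀ (by positivity) h5).symm

open Polynomial in
/-- Repeated integration by parts on `[0, 1]`, the boundary terms of `(t(t-1))ⁿ` being zero. -/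
theorem integral_by_parts_iterate (n k : ℕ) (hk : k ≤ n) (f : ℝ[X]) :
    ∫ t in (0:ℝ)..1, f.eval t * (derivative^[k] ((X * (X - 1)) ^ n : ℝ[X])).eval t =
      (-1) ^ k * ∫ t in (0:ℝ)..1, (derivative^[k] f).eval t * ((X * (X - 1)) ^ n : ℝ[X]).eval t := by
  induction k generalizing f with
  | zero => simp
  | succ k ih =>
    set g : ℝ[X] := derivative^[k] ((X * (X - 1)) ^ n : ℝ[X]) with hg
    have hdvd : (X * (X - 1) : ℝ[X]) ∣ g := by
      have h := pow_sub_dvd_iterate_derivative_of_pow_dvd (q := (X * (X - 1) : ℝ[X])) k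
        (dvd_refl ((X * (X - 1)) ^ n))
      exact (dvd_pow_self _ (by omega)).trans h
    obtain ⟨r, hr⟩ := hdvd
    have hg0 : g.eval 0 = 0 := by rw [hr]; simp
    have hg1 : g.eval 1 = 0 := by rw [hr]; simp
    have hp := intervalIntegral.integral_mul_deriv_eq_deriv_mul (a := (0:ℝ)) (b := 1)
      (u := fun t => f.eval t) (v := fun t => g.eval t) (u' := fun t => (derivative f).eval t)
      (v' := fun t => (derivative g).eval t) (fun x _ => f.hasDerivAt x) (fun x _ => g.hasDerivAt x)
      ((derivative f).continuous.intervalIntegrable _ _)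
      ((derivative g).continuous.intervalIntegrable _ _)
    rw [Function.iterate_succ_apply', ← hg, hp, hg0, hg1, ih (by omega) (derivative f),
      Function.iterate_succ_apply]
    ring

theorem integral_beta (a n : ℕ) :
    ∫ t in (0:ℝ)..1, t ^ a * (1 - t) ^ n =
      (a.factorial : ℝ) * n.factorial / (a + n + 1).factorial := by
  induction n generalizing a with
  | zero =>
    simp [Nat.factorial_succ]
    field_simp
  | succ n ih =>
    have h : (fun t : ℝ => t ^ a * (1 - t) ^ (n + 1)) =
        fun t => t ^ a * (1 - t) ^ n - t ^ (a + 1) * (1 - t) ^ n := by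
      funext t; ring
    rw [h, intervalIntegral.integral_sub
      (Continuous.intervalIntegrable (by fun_prop) _ _)
      (Continuous.intervalIntegrable (by fun_prop) _ _), ih, ih]
    rw [show a + 1 + n + 1 = (a + n + 1) + 1 by ring, show a + (n + 1) + 1 = (a + n + 1) + 1 by ring]
    simp only [Nat.factorial_succ (a + n + 1), Nat.factorial_succ a, Nat.factorial_succ n]
    have := Nat.factorial_ne_zero (a + n + 1)
    push_cast
    field_simp
    ring

/-- Moments of the shifted Legendre polynomial; the right-hand side is `0` for `a < n`. -/
theorem integral_pow_mul_legendre (a n : ℕ) :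
    ∫ t in (0:ℝ)..1, t ^ a * legendreMonic n (2 * t - 1) =
      ((n.factorial : ℝ) / (2 * n).factorial) * 2 ^ n * (a.descFactorial n : ℝ) *
        ((a.factorial : ℝ) * n.factorial / (a + n + 1).factorial) := by
  have h1 : (fun t : ℝ => t ^ a * legendreMonic n (2 * t - 1)) = fun t =>
      (((n.factorial : ℝ) / (2 * n).factorial) * 2 ^ n) * ((Polynomial.X ^ a : Polynomial ℝ).eval t *
        (Polynomial.derivative^[n]
          ((Polynomial.X * (Polynomial.X - 1)) ^ n : Polynomial ℝ)).eval t) := by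
    funext t
    rw [legendreMonic_shift]
    simp only [Polynomial.eval_pow, Polynomial.eval_X]
    ring
  rw [h1, intervalIntegral.integral_const_mul, integral_by_parts_iterate n n le_rfl,
    mul_assoc _ (a.descFactorial n : ℝ)]
  congr 1
  rw [← integral_beta, ← intervalIntegral.integral_const_mul,
    ← intervalIntegral.integral_const_mul]
  refine intervalIntegral.integral_congr fun t _ => ?_
  simp only [Polynomial.iterate_derivative_X_pow_eq_natCast_mul, Polynomial.eval_mul,
    Polynomial.eval_natCast, Polynomial.eval_pow, Polynomial.eval_X, Polynomial.eval_sub,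
    Polynomial.eval_one]
  by_cases h : n ≤ a
  · obtain ⟨b, rfl⟩ := Nat.exists_eq_add_of_le h
    rw [Nat.add_sub_cancel_left, show (1 - t) = (-1) * (t - 1) by ring, mul_pow, mul_pow]
    ring
  · rw [Nat.descFactorial_of_lt (by omega)]
    simp

theorem poch_succ (a : ℝ) (k : ℕ) : poch a (k + 1) = poch a k * (a + k) :=
  Finset.prod_range_succ _ _

/-- Descending duplication formula. -/
theorem poch_half_neg (N k : ℕ) (h : 2 * k ≤ N) :
    poch (-(N : ℝ) / 2) k * poch (-(N : ℝ) / 2 + 1 / 2) k * 4 ^ k * ((N - 2 * k).factorial : ℝ) =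
      N.factorial := by
  induction k with
  | zero => simp [poch]
  | succ k ih =>
    rw [← ih (by omega), poch_succ, poch_succ]
    obtain ⟨b, rfl⟩ := Nat.exists_eq_add_of_le h
    rw [show 2 * (k + 1) + b - 2 * k = b + 1 + 1 by omega,
      show 2 * (k + 1) + b - 2 * (k + 1) = b by omega, Nat.factorial_succ, Nat.factorial_succ]
    push_cast
    ring

/-- Ascending duplication formula. -/
theorem poch_half_pos (N k : ℕ) :
    poch ((N : ℝ) / 2 + 1) k * poch ((N : ℝ) / 2 + 1 / 2) k * 4 ^ k * (N.factorial : ℝ) =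
      (N + 2 * k).factorial := by
  induction k with
  | zero => simp [poch]
  | succ k ih =>
    rw [show N + 2 * (k + 1) = N + 2 * k + 1 + 1 by ring, Nat.factorial_succ, Nat.factorial_succ]
    push_cast
    rw [← ih, poch_succ, poch_succ]
    ring

theorem poch_half_sub (m k : ℕ) (h : k ≤ m) :
    ((2 * m).factorial : ℝ) * (m - k).factorial =
      (2 * m - 2 * k).factorial * m.factorial * (-4) ^ k * poch (1 / 2 - m) k := by
  induction k with
  | zero => simp [poch]
  | succ k ih =>
    have ih := ih (by omega)
    obtain ⟨b, rfl⟩ := Nat.exists_eq_add_of_le h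
    rw [show k + 1 + b - k = b + 1 by omega,
      show 2 * (k + 1 + b) - 2 * k = 2 * b + 1 + 1 by omega, Nat.factorial_succ,
      Nat.factorial_succ, Nat.factorial_succ] at ih
    rw [show k + 1 + b - (k + 1) = b by omega,
      show 2 * (k + 1 + b) - 2 * (k + 1) = 2 * b by omega, poch_succ]
    push_cast at ih ⊢
    have hb : (b : ℝ) + 1 ≠ 0 := by positivity
    refine mul_left_cancel₀ hb ?_
    linear_combination ih

theorem poch_nat (a k : ℕ) : poch ((a : ℝ) + 1) k * (a.factorial : ℝ) = (a + k).factorial := by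
  induction k with
  | zero => simp [poch]
  | succ k ih =>
    rw [← add_assoc, Nat.factorial_succ, poch_succ]
    push_cast
    rw [← ih]
    ring

/-- The prefactor of the hypergeometric sum, expressed through factorials. -/
theorem prefactor_eq (i j : ℕ) (hij : j ≤ i) :
    -((2 : ℝ) ^ (2 * j)) *
        (poch (-(i : ℝ)) j * poch (-(i : ℝ) - 1 / 2) (j + 1) * (2 * j + 1).factorial /
          (poch ((i : ℝ) + 3 / 2) (j + 1) * poch ((i : ℝ) + 1) (j + 1) *
            poch (2 * j + 2) (2 * j + 1))) =
      (((2 * j + 1).factorial : ℝ) ^ 2 / (2 * (2 * j + 1)).factorial) * 2 ^ (2 * j + 1) *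
        (((2 * i + 1).factorial : ℝ) ^ 2 /
          ((2 * i - 2 * j).factorial * (2 * i + 2 * j + 3).factorial)) := by
  have h1 := poch_half_neg (2 * i + 1) j (by omega)
  have h2 := poch_half_pos (2 * i + 1) (j + 1)
  have h3 := poch_nat (2 * j + 1) (2 * j + 1)
  rw [show 2 * i + 1 - 2 * j = (2 * i - 2 * j) + 1 by omega, Nat.factorial_succ] at h1
  rw [show 2 * i + 1 + 2 * (j + 1) = 2 * i + 2 * j + 3 by ring] at h2
  rw [show 2 * j + 1 + (2 * j + 1) = 2 * (2 * j + 1) by ring] at h3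
  rw [poch_succ (-(i : ℝ) - 1 / 2) j]
  rw [Nat.cast_mul, Nat.cast_succ (2 * i - 2 * j), Nat.cast_sub (by omega)] at h1
  push_cast at h1 h2 h3
  rw [show (-(2 * (i : ℝ) + 1) / 2) = -(i : ℝ) - 1 / 2 by ring,
    show (-(i : ℝ) - 1 / 2 + 1 / 2) = -(i : ℝ) by ring] at h1
  rw [show ((2 * (i : ℝ) + 1) / 2 + 1) = (i : ℝ) + 3 / 2 by ring,
    show ((2 * (i : ℝ) + 1) / 2 + 1 / 2) = (i : ℝ) + 1 by ring] at h2
  rw [show (2 * (j : ℝ) + 1 + 1) = 2 * j + 2 by ring] at h3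
  have f1 : ((2 * i - 2 * j).factorial : ℝ) ≠ 0 := by positivity
  have f2 : ((2 * i + 2 * j + 3).factorial : ℝ) ≠ 0 := by positivity
  have f3 : ((2 * (2 * j + 1)).factorial : ℝ) ≠ 0 := by positivity
  have f4 : ((2 * j + 1).factorial : ℝ) ≠ 0 := by positivity
  have f5 : ((2 * i + 1).factorial : ℝ) ≠ 0 := by positivity
  rw [← h2] at f2 ⊢
  rw [← h3] at f3 ⊢
  simp only [mul_ne_zero_iff] at f2 f3
  obtain ⟨⟨⟨g1, g2⟩, -⟩, -⟩ := f2
  obtain ⟨g3, -⟩ := f3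
  have h4 : (4 : ℝ) ^ j = 2 ^ (2 * j) := by rw [pow_mul]; norm_num
  rw [pow_succ (4 : ℝ), h4, pow_succ (2 : ℝ)]
  rw [h4] at h1
  have f6 : (2 : ℝ) ^ (2 * j) ≠ 0 := by positivity
  field_simp
  rw [← h1]
  ring_nf

/-- The `k`-th term of the expanded integral in terms of the `k`-th hypergeometric term. -/
theorem term_eq (i j k : ℕ) (hk : j + k ≤ i) :
    (((2 * i + 1).factorial : ℝ) / (2 * (2 * i + 1)).factorial) *
      ((-1) ^ k * ((2 * i + 1).choose k : ℝ) *
        ((2 * (2 * i + 1) - 2 * k).descFactorial (2 * i + 1) : ℝ)) *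
      (((2 * i + 1 - 2 * k).descFactorial (2 * j + 1) : ℝ) *
        ((2 * i + 1 - 2 * k).factorial / (2 * i + 1 - 2 * k + (2 * j + 1) + 1).factorial)) =
    (((2 * i + 1).factorial : ℝ) ^ 2 /
          ((2 * i - 2 * j).factorial * (2 * i + 2 * j + 3).factorial)) *
      (poch (-((i : ℝ) - j)) k * poch (-(i : ℝ) + j + 1 / 2) k *
              poch (-(i : ℝ) - j - 1) k * poch (-(i : ℝ) - j - 3 / 2) k /
            (poch (-2 * i - 1 / 2) k * poch (-(i : ℝ)) k * poch (-(i : ℝ) - 1 / 2) k *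
              k.factorial)) := by
  have h1 := poch_half_neg (2 * i + 1) k (by omega)
  have h2 := poch_half_neg (2 * i - 2 * j) k (by omega)
  have h3 := poch_half_neg (2 * i + 2 * j + 3) k (by omega)
  have h4 := poch_half_sub (2 * i + 1) k (by omega)
  have d1 := Nat.factorial_mul_descFactorial
    (show 2 * i + 1 ≤ 2 * (2 * i + 1) - 2 * k by omega)
  have d2 := Nat.factorial_mul_descFactorial
    (show 2 * j + 1 ≤ 2 * i + 1 - 2 * k by omega)
  have d3 := Nat.choose_mul_factorial_mul_factorial (show k ≤ 2 * i + 1 by omega)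
  rw [show 2 * (2 * i + 1) - 2 * k - (2 * i + 1) = 2 * i + 1 - 2 * k by omega] at d1
  rw [show 2 * i + 1 - 2 * k - (2 * j + 1) = 2 * i - 2 * j - 2 * k by omega] at d2
  rw [show 2 * i + 1 - 2 * k + (2 * j + 1) + 1 = 2 * i + 2 * j + 3 - 2 * k by omega]
  rw [Nat.cast_sub (show 2 * j ≤ 2 * i by omega)] at h2
  replace d1 := congrArg (Nat.cast (R := ℝ)) d1
  replace d2 := congrArg (Nat.cast (R := ℝ)) d2
  replace d3 := congrArg (Nat.cast (R := ℝ)) d3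
  rw [Nat.cast_mul] at d1 d2
  rw [Nat.cast_mul, Nat.cast_mul] at d3
  simp only [Nat.cast_add, Nat.cast_mul, Nat.cast_ofNat, Nat.cast_one] at h1 h2 h3 h4
  rw [show (-(2 * (i : ℝ) + 1) / 2) = -(i : ℝ) - 1 / 2 by ring,
    show (-(i : ℝ) - 1 / 2 + 1 / 2) = -(i : ℝ) by ring] at h1
  rw [show (-(2 * (i : ℝ) - 2 * j) / 2) = -((i : ℝ) - j) by ring,
    show (-((i : ℝ) - j) + 1 / 2) = -(i : ℝ) + j + 1 / 2 by ring] at h2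
  rw [show (-(2 * (i : ℝ) + 2 * j + 3) / 2) = -(i : ℝ) - j - 3 / 2 by ring,
    show (-(i : ℝ) - j - 3 / 2 + 1 / 2) = -(i : ℝ) - j - 1 by ring] at h3
  rw [show (1 / 2 - (2 * (i : ℝ) + 1)) = -2 * i - 1 / 2 by ring] at h4
  have e4 : (-4 : ℝ) ^ k = (-1) ^ k * 4 ^ k := by rw [← mul_pow]; norm_num
  have e1 : ((-1 : ℝ) ^ k) ^ 2 = 1 := by rw [← pow_mul, mul_comm, pow_mul]; norm_num
  rw [e4] at h4
  have F1 : ((2 * i + 1).factorial : ℝ) ≠ 0 := by positivity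
  have F2 : ((2 * (2 * i + 1)).factorial : ℝ) ≠ 0 := by positivity
  have F3 : ((2 * i - 2 * j).factorial : ℝ) ≠ 0 := by positivity
  have F4 : ((2 * i + 2 * j + 3).factorial : ℝ) ≠ 0 := by positivity
  have F5 : ((2 * i + 1 - 2 * k).factorial : ℝ) ≠ 0 := by positivity
  have F6 : ((2 * i - 2 * j - 2 * k).factorial : ℝ) ≠ 0 := by positivity
  have F7 : ((2 * i + 2 * j + 3 - 2 * k).factorial : ℝ) ≠ 0 := by positivity
  have F8 : ((2 * (2 * i + 1) - 2 * k).factorial : ℝ) ≠ 0 := by positivity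
  have F9 : ((2 * i + 1 - k).factorial : ℝ) ≠ 0 := by positivity
  have F10 : (k.factorial : ℝ) ≠ 0 := by positivity
  have F11 : (4 : ℝ) ^ k ≠ 0 := by positivity
  have F12 : (-1 : ℝ) ^ k ≠ 0 := by intro h; rw [h] at e1; norm_num at e1
  -- Abstracting the factorials leaves a rational identity, solved for one factor per relation.
  generalize ((2 * i + 1).factorial : ℝ) = A at *
  generalize ((2 * (2 * i + 1)).factorial : ℝ) = B at *
  generalize ((2 * i - 2 * j).factorial : ℝ) = C at *
  generalize ((2 * i + 2 * j + 3).factorial : ℝ) = D at *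
  generalize ((2 * i + 1 - 2 * k).factorial : ℝ) = A' at *
  generalize ((2 * i - 2 * j - 2 * k).factorial : ℝ) = C' at *
  generalize ((2 * i + 2 * j + 3 - 2 * k).factorial : ℝ) = D' at *
  generalize ((2 * (2 * i + 1) - 2 * k).factorial : ℝ) = B' at *
  generalize ((2 * i + 1 - k).factorial : ℝ) = E at *
  generalize (k.factorial : ℝ) = K at *
  generalize (4 : ℝ) ^ k = q at *
  generalize (-1 : ℝ) ^ k = s at *
  generalize ((2 * i + 1).choose k : ℝ) = c at *
  generalize ((2 * (2 * i + 1) - 2 * k).descFactorial (2 * i + 1) : ℝ) = x at *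
  generalize ((2 * i + 1 - 2 * k).descFactorial (2 * j + 1) : ℝ) = y at *
  generalize poch (-(i : ℝ) - 1 / 2) k = a1 at *
  generalize poch (-(i : ℝ)) k = a2 at *
  generalize poch (-((i : ℝ) - j)) k = c1 at *
  generalize poch (-(i : ℝ) + j + 1 / 2) k = c2 at *
  generalize poch (-(i : ℝ) - j - 3 / 2) k = d1' at *
  generalize poch (-(i : ℝ) - j - 1) k = d2' at *
  generalize poch (-2 * (i : ℝ) - 1 / 2) k = b at *
  have G1 : a1 ≠ 0 := by rintro rfl; apply F1; rw [← h1]; ring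
  have G2 : a2 ≠ 0 := by rintro rfl; apply F1; rw [← h1]; ring
  have G3 : b ≠ 0 := by
    rintro rfl
    exact mul_ne_zero F2 F9 (by rw [h4]; ring)
  have ex : x = B' / A' := by rw [eq_div_iff F5, ← d1]; ring
  have ey : y = A' / C' := by rw [eq_div_iff F6, ← d2]; ring
  have ec : c = A / (K * E) := by rw [eq_div_iff (mul_ne_zero F10 F9), ← d3]; ring
  have eB : B = B' * A * (s * q) * b / E := by rw [eq_div_iff F9, h4]
  have eA : A' = A / (a1 * a2 * q) := by
    rw [eq_div_iff (by positivity), ← h1]; ring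
  rw [ex, ey, ec, eB, ← h2, ← h3]
  have hc : c1 * c2 * d1' * d2' ≠ 0 := by
    rw [← h2] at F3
    rw [← h3] at F4
    simp only [mul_ne_zero_iff] at F3 F4 ⊢
    tauto
  simp only [mul_ne_zero_iff] at hc
  obtain ⟨⟨⟨hc1, hc2⟩, hd1⟩, hd2⟩ := hc
  rw [eA]
  field_simp

theorem alpertI_odd_odd (i j : ℕ) (hij : j ≤ i) :
    alpertI (2 * i + 1) (2 * j + 1) =
      -((2 : ℝ) ^ (2 * j)) *
        (poch (-(i : ℝ)) j * poch (-(i : ℝ) - 1 / 2) (j + 1) * (2 * j + 1).factorial /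
          (poch ((i : ℝ) + 3 / 2) (j + 1) * poch ((i : ℝ) + 1) (j + 1) *
            poch (2 * j + 2) (2 * j + 1))) *
        ∑ k ∈ Finset.range (i - j + 1),
          poch (-((i : ℝ) - j)) k * poch (-(i : ℝ) + j + 1 / 2) k *
              poch (-(i : ℝ) - j - 1) k * poch (-(i : ℝ) - j - 3 / 2) k /
            (poch (-2 * i - 1 / 2) k * poch (-(i : ℝ)) k * poch (-(i : ℝ) - 1 / 2) k *
              k.factorial) := by
  have hI : alpertI (2 * i + 1) (2 * j + 1) = ∑ k ∈ Finset.range (2 * i + 1 + 1),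
      (((2 * i + 1).factorial : ℝ) / (2 * (2 * i + 1)).factorial) *
      ((-1) ^ k * ((2 * i + 1).choose k : ℝ) *
        ((2 * (2 * i + 1) - 2 * k).descFactorial (2 * i + 1) : ℝ)) *
      ∫ t in (0:ℝ)..1, t ^ (2 * i + 1 - 2 * k) * legendreMonic (2 * j + 1) (2 * t - 1) := by
    have hc : Continuous fun t : ℝ => legendreMonic (2 * j + 1) (2 * t - 1) := by
      simp only [legendreMonic_shift]
      exact continuous_const.mul (Polynomial.continuous _)
    unfold alpertI
    simp only [legendreMonic_expansion (2 * i + 1), Finset.sum_mul]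
    rw [intervalIntegral.integral_finsetSum
      (fun k _ => Continuous.intervalIntegrable (by fun_prop) _ _)]
    refine Finset.sum_congr rfl fun k _ => ?_
    rw [← intervalIntegral.integral_const_mul]
    refine intervalIntegral.integral_congr fun t _ => ?_
    simp only [mul_assoc]
  rw [hI, prefactor_eq i j hij, Finset.mul_sum]
  -- For `k > i - j` the power of `t` has degree below `2j+1` and its moment vanishes.
  rw [← Finset.sum_subset (Finset.range_subset_range.2 (show i - j + 1 ≤ 2 * i + 1 + 1 by omega))]
  · refine Finset.sum_congr rfl fun k hk => ?_
    have hk' : j + k ≤ i := by have := Finset.mem_range.1 hk; omega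
    rw [integral_pow_mul_legendre, mul_assoc (_ * _) (_ / _) (_ / _), ← term_eq i j k hk']
    ring
  · intro k _ hk
    have hk' : i - j < k := by
      rw [Finset.mem_range] at hk; omega
    rw [integral_pow_mul_legendre, Nat.descFactorial_of_lt (n := 2 * i + 1 - 2 * k) (by omega)]
    simp
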